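/- arXiv:1804.01898 — 2 statements merged into one kernel-verified Lean document; each statement's English description precedes it below -/
import Mathlib

section
/- Fix an integer s ≥ 2. Define r : ℤ → ℚ by r(n) = 1/n! for n ≥ 0 and r(n) = 0 for n < 0. Let (i₁,…,i_{2s+1}) be given by i₁ = 2, i_j = 1 for 2 ≤ j ≤ 2s−1, and i_{2s} = i_{2s+1} = 0. Then the determinant of the (2s+1)×(2s+1) matrix with (j,ℓ)-entry r(s − 1 + i_j − j + ℓ) equals (s(2s+1)(s+1)²(2s−1)/(3s+1))·∏_{k=0}^{2s} k!/(s+k)!. -/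
/-!
Reversing the order of rows and of columns turns the matrix into `1 / (v i - k)!`, where
`v = (s-1, s, s+2, s+3, …, 3s-1, 3s+1)`. Since `1 / (a - k)! = a (a-1) ⋯ (a-k+1) / a!`, and the
falling factorials are monic of degree `k`, the determinant is the Vandermonde determinant of `v`
divided by `∏ (v i)!` (`det_rfact_sub`). Node by node, the factor
`∏_{i<j} (v j - v i) / (v j)!` is `j! / (s+j)!` (its value for the nodes `s, s+1, …, 3s`) times
`s`, `s+1`, `(j+1)/(j-1)` for `2 ≤ j < 2s`, and `(2s+2)(2s+1) / (2s(3s+1))` for `j = 2s`; the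
product of these corrections telescopes.
-/

/-- `r(n) = 1/n!` for `n ≥ 0` and `r(n) = 0` for `n < 0`. -/
def rfact (n : ℤ) : ℚ := if 0 ≤ n then 1 / (Nat.factorial n.toNat : ℚ) else 0

lemma rfact_natCast_sub (a k : ℕ) :
    rfact ((a : ℤ) - k) = ((a.factorial : ℚ))⁻¹ * (descPochhammer ℚ k).eval (a : ℚ) := by
  rw [descPochhammer_eval_eq_descFactorial]
  have ha : (a.factorial : ℚ) ≠ 0 := by exact_mod_cast a.factorial_ne_zero
  unfold rfact
  by_cases h : k ≤ a
  · have e : ((a : ℤ) - k).toNat = a - k := by omega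
    have hk : ((a - k).factorial : ℚ) ≠ 0 := by exact_mod_cast (a - k).factorial_ne_zero
    have := Nat.factorial_mul_descFactorial h
    rw [if_pos (by omega), e]
    field_simp
    rw [← this]; push_cast; ring
  · rw [if_neg (by omega), Nat.descFactorial_of_lt (by omega)]
    simp

lemma prod_Ioi_eq_prod_range (n : ℕ) (v : ℕ → ℚ) :
    ∏ i : Fin n, ∏ j ∈ Finset.Ioi i, (v j - v i) =
      ∏ j ∈ Finset.range n, ∏ i ∈ Finset.range j, (v j - v i) := by
  rw [Finset.prod_comm' (t' := Finset.univ) (s' := fun j => Finset.Iio j) (by simp),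
    ← Fin.prod_univ_eq_prod_range (fun j => ∏ i ∈ Finset.range j, (v j - v i))]
  refine Finset.prod_congr rfl fun j _ => ?_
  rw [← Nat.Iio_eq_range, ← Fin.map_valEmbedding_Iio, Finset.prod_map]
  rfl

/-- The determinant of `1 / (v i - k)!` is the Vandermonde determinant of the nodes `v` over
`∏ (v i)!`. -/
lemma det_rfact_sub (n : ℕ) (v : ℕ → ℕ) :
    Matrix.det (Matrix.of fun i k : Fin n => rfact ((v i : ℤ) - (k : ℕ))) =
      ∏ j ∈ Finset.range n,
        ((v j).factorial : ℚ)⁻¹ * ∏ i ∈ Finset.range j, ((v j : ℚ) - v i) := by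
  simp_rw [rfact_natCast_sub]
  have h1 := Matrix.det_mul_column (fun i : Fin n => ((v i).factorial : ℚ)⁻¹)
    (Matrix.of fun i k : Fin n => (descPochhammer ℚ k).eval (v i : ℚ))
  have h2 := Matrix.det_eval_matrixOfPolynomials_eq_det_vandermonde
    (fun i : Fin n => (v i : ℚ)) (fun k => descPochhammer ℚ k)
    (fun k => descPochhammer_natDegree ℚ k) (fun k => monic_descPochhammer ℚ k)
  rw [Finset.prod_mul_distrib, ← prod_Ioi_eq_prod_range n (fun i => (v i : ℚ)),
    ← Matrix.det_vandermonde (fun i : Fin n => (v i : ℚ)), h2,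
    ← Fin.prod_univ_eq_prod_range (fun j => ((v j).factorial : ℚ)⁻¹)]
  exact h1

/-- The nodes `s-1, s, s+2, s+3, …, 3s-1, 3s+1`, in increasing order. -/
def node (s i : ℕ) : ℕ := if i < 2 then s + i - 1 else if i < 2 * s then s + i else s + i + 1

lemma prod_range_sub_node (s j : ℕ) (hs : 2 ≤ s) (hj : j + 2 ≤ 2 * s) (x : ℚ) :
    ∏ i ∈ Finset.range (j + 2), (x - node s i) =
      (x - s + 1) * (x - s) * ∏ i ∈ Finset.range j, (x - s - 2 - i) := by
  rw [Finset.prod_range_succ', Finset.prod_range_succ']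
  have h0 : (node s 0 : ℚ) = s - 1 := by
    simp [node, Nat.cast_sub (show 1 ≤ s by omega)]
  have h1 : node s 1 = s := by simp [node]
  have : ∏ i ∈ Finset.range j, (x - node s (i + 1 + 1)) =
      ∏ i ∈ Finset.range j, (x - s - 2 - i) := by
    refine Finset.prod_congr rfl fun i hi => ?_
    rw [Finset.mem_range] at hi
    rw [node, if_neg (by omega), if_pos (by omega)]
    push_cast; ring
  rw [this, zero_add, h1, h0]; ring

lemma prod_range_natCast_sub (j : ℕ) :
    ∏ i ∈ Finset.range j, ((j : ℚ) - i) = j.factorial := by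
  rw [← Finset.prod_range_reflect, ← Finset.prod_range_add_one_eq_factorial]
  push_cast
  refine Finset.prod_congr rfl fun i hi => ?_
  rw [Finset.mem_range] at hi
  rw [Nat.cast_sub (by omega), Nat.cast_sub (by omega)]
  push_cast; ring

lemma prod_range_natCast_add_one_sub (j : ℕ) :
    ∏ i ∈ Finset.range j, ((j : ℚ) + 1 - i) = (j + 1).factorial := by
  have h := prod_range_natCast_sub (j + 1)
  rw [Finset.prod_range_succ] at h
  push_cast at h ⊢
  linarith

/-- All factors of the Vandermonde product except the one of the last node. -/
lemma prod_factor (s m : ℕ) (hs : 2 ≤ s) (hm : m + 2 ≤ 2 * s) :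
    ∏ j ∈ Finset.range (m + 2), (((node s j).factorial : ℚ)⁻¹ *
        ∏ i ∈ Finset.range j, ((node s j : ℚ) - node s i)) =
      (s : ℚ) * (s + 1) * (m + 2) * (m + 1) / 2 *
        ∏ k ∈ Finset.range (m + 2), (k.factorial : ℚ) / ((s + k).factorial : ℚ) := by
  induction m with
  | zero =>
    obtain ⟨t, rfl⟩ : ∃ t, s = t + 1 := ⟨s - 1, by omega⟩
    have ht : (t.factorial : ℚ) ≠ 0 := by exact_mod_cast t.factorial_ne_zero
    simp [Finset.prod_range_succ, node, Nat.factorial_succ]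
    field_simp
  | succ m ih =>
    rw [show m + 1 + 2 = (m + 2) + 1 by ring, Finset.prod_range_succ, ih (by omega),
      Finset.prod_range_succ _ (m + 2), prod_range_sub_node s m hs (by omega)]
    have hn : node s (m + 2) = s + (m + 2) := by
      rw [node, if_neg (by omega), if_pos (by omega)]
    have hp : ∏ i ∈ Finset.range m, (((s + (m + 2) : ℕ) : ℚ) - s - 2 - i) = m.factorial := by
      rw [← prod_range_natCast_sub]
      refine Finset.prod_congr rfl fun i _ => ?_
      push_cast; ring
    have hf : ((s + (m + 2)).factorial : ℚ) ≠ 0 := by exact_mod_cast Nat.factorial_ne_zero _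
    rw [hn, hp, Nat.factorial_succ (m + 1), Nat.factorial_succ m]
    push_cast
    field_simp
    ring

/-- For `i₁ = 2`, `i_j = 1` for `2 ≤ j ≤ 2s−1` and `i_{2s} = i_{2s+1} = 0`, the
determinant of the `(2s+1)×(2s+1)` matrix with `(j,ℓ)`-entry `r(s − 1 + i_j − j + ℓ)`
equals `(s(2s+1)(s+1)²(2s−1)/(3s+1))·∏_{k=0}^{2s} k!/(s+k)!`. -/
theorem harris_tu_determinant_sq_theta (s : ℕ) (hs : 2 ≤ s) :
    Matrix.det (Matrix.of fun j ℓ : Fin (2*s + 1) =>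
        rfact ((s : ℤ) - 1 +
          (if (j : ℕ) = 0 then 2 else if (j : ℕ) < 2*s - 1 then 1 else 0) +
          (ℓ : ℕ) - (j : ℕ))) =
      (s : ℚ) * (2*(s : ℚ) + 1) * ((s : ℚ) + 1)^2 * (2*(s : ℚ) - 1) / (3*(s : ℚ) + 1) *
        ∏ k ∈ Finset.range (2*s + 1),
          (Nat.factorial k : ℚ) / (Nat.factorial (s + k) : ℚ) := by
  have hrev := det_rfact_sub (2 * s + 1) (node s)
  rw [← Matrix.det_submatrix_equiv_self (Fin.revPerm (n := 2 * s + 1))]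
  refine Eq.trans (congrArg Matrix.det ?_) (hrev.trans ?_)
  · ext i k
    have hi := i.isLt
    have hk := k.isLt
    simp only [Matrix.submatrix_apply, Matrix.of_apply, Fin.revPerm_apply, Fin.val_rev, node]
    congr 1
    split_ifs <;> omega
  · obtain ⟨m, hm⟩ : ∃ m, 2 * s = m + 2 := ⟨2 * s - 2, by omega⟩
    have hmq : (m : ℚ) = 2 * s - 2 := by
      have : (2 * s : ℚ) = m + 2 := by exact_mod_cast hm
      linarith
    have hn : node s (m + 2) = s + (m + 2) + 1 := by
      rw [node, if_neg (by omega), if_neg (by omega)]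
    have hp : ∏ i ∈ Finset.range m, (((s + (m + 2) + 1 : ℕ) : ℚ) - s - 2 - i) =
        (m + 1).factorial := by
      rw [← prod_range_natCast_add_one_sub]
      refine Finset.prod_congr rfl fun i _ => ?_
      push_cast; ring
    have hf : ((s + (m + 2)).factorial : ℚ) ≠ 0 := by exact_mod_cast Nat.factorial_ne_zero _
    have hs0 : (s : ℚ) ≠ 0 := by positivity
    have h3 : (3 * s + 1 : ℚ) ≠ 0 := by positivity
    have h3' : (s + (2 * s - 2 + 2) + 1 : ℚ) = 3 * s + 1 := by ring
    rw [hm, Finset.prod_range_succ, prod_factor s m hs (by omega),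
      Finset.prod_range_succ _ (m + 2), prod_range_sub_node s m hs (by omega), hn, hp,
      Nat.factorial_succ (s + (m + 2)), Nat.factorial_succ (m + 1)]
    push_cast
    rw [hmq, h3']
    field_simp
    ring
end

section
/- Fix an integer s ≥ 2. Define r : ℤ → ℚ by r(n) = 1/n! for n ≥ 0 and r(n) = 0 for n < 0. Let (i₁,…,i_{2s+1}) be given by i₁ = 3, i_j = 1 for 2 ≤ j ≤ 2s−2, and i_{2s−1} = i_{2s} = i_{2s+1} = 0. Then the determinant of the (2s+1)×(2s+1) matrix with (j,ℓ)-entry r(s − 1 + i_j − j + ℓ) equals (s(2s+1)(s−1)(s+1)²(s+2)(2s−1)(2s+3)/(3(3s+1)(3s+2)))·∏_{k=0}^{2s} k!/(s+k)!. -/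
open Finset

/-- Holds for `m > c` too, where both sides vanish. -/
lemma rfact_sub (c m : ℕ) :
    rfact ((c : ℤ) - m) = ((c.factorial : ℚ))⁻¹ * (descPochhammer ℚ m).eval (c : ℚ) := by
  rw [descPochhammer_eval_eq_descFactorial]
  unfold rfact
  split_ifs with h
  · have hm : m ≤ c := by omega
    have e : ((c : ℤ) - m).toNat = c - m := by omega
    rw [e, ← Nat.factorial_mul_descFactorial hm]
    have h1 : ((c - m).factorial : ℚ) ≠ 0 := by positivity
    have h2 : (c.descFactorial m : ℚ) ≠ 0 := by
      exact_mod_cast (Nat.pos_of_ne_zero (by rw [Ne, Nat.descFactorial_eq_zero_iff_lt]; omega)).ne'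
    push_cast
    field_simp
  · rw [Nat.descFactorial_eq_zero_iff_lt.mpr (by omega)]
    simp

lemma det_rfact (n : ℕ) (c : ℕ → ℕ) :
    Matrix.det (Matrix.of fun k m : Fin n => rfact ((c k : ℤ) - (m : ℕ))) =
      ∏ k ∈ range n, (∏ i ∈ range k, ((c k : ℚ) - c i)) / ((c k).factorial : ℚ) := by
  have h1 : (Matrix.of fun k m : Fin n => rfact ((c k : ℤ) - (m : ℕ))) =
      Matrix.of fun k m : Fin n => ((c k).factorial : ℚ)⁻¹ *
        (Matrix.of fun k m : Fin n => (descPochhammer ℚ m).eval (c k : ℚ)) k m := by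
    ext k m
    simp [rfact_sub]
  rw [h1, Matrix.det_mul_column,
    ← Matrix.det_eval_matrixOfPolynomials_eq_det_vandermonde (fun k : Fin n => (c k : ℚ))
      (fun m : Fin n => descPochhammer ℚ m) (fun m => descPochhammer_natDegree ℚ m)
      (fun m => monic_descPochhammer ℚ m),
    Matrix.det_vandermonde]
  -- the Vandermonde product, regrouped by its larger index
  have h2 : ∏ i : Fin n, ∏ j ∈ Ioi i, ((c j : ℚ) - c i) =
      ∏ k ∈ range n, ∏ i ∈ range k, ((c k : ℚ) - c i) := by
    rw [prod_comm' (t' := univ) (s' := fun j => Iio j) (by simp),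
      ← Fin.prod_univ_eq_prod_range (fun k => ∏ i ∈ range k, ((c k : ℚ) - c i))]
    refine prod_congr rfl fun j _ => ?_
    rw [← Nat.Iio_eq_range, ← Fin.map_valEmbedding_Iio, prod_map]
    rfl
  rw [h2, Fin.prod_univ_eq_prod_range (fun k => ((c k).factorial : ℚ)⁻¹), ← prod_mul_distrib]
  exact prod_congr rfl fun k _ => by rw [div_eq_mul_inv, mul_comm]

/-- The increasing sequence `s-1, s, s+1, s+3, …, 3s-1, 3s+2` for `s = t + 2`, indexed by
`0 ≤ k ≤ 2s = 2t + 4`. -/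
def nodeSeq (t k : ℕ) : ℕ :=
  if k < 3 then t + 1 + k else if k < 2 * t + 4 then t + 2 + k else t + 4 + k

lemma prod_range_sub (q : ℕ) : ∏ i ∈ range q, ((q : ℚ) - i) = (q.factorial : ℚ) := by
  rw [← prod_range_reflect, ← prod_range_add_one_eq_factorial, Nat.cast_prod]
  refine prod_congr rfl fun i hi => ?_
  have hi := mem_range.mp hi
  rw [Nat.cast_sub (by omega), Nat.cast_sub (by omega)]
  push_cast
  ring

lemma factor_middle (t q : ℕ) (hq : q < 2 * t + 1) :
    (∏ i ∈ range (3 + q), ((nodeSeq t (3 + q) : ℚ) - nodeSeq t i)) /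
        ((nodeSeq t (3 + q)).factorial : ℚ) =
      ((q : ℚ) + 4) / (q + 1) *
        (((3 + q).factorial : ℚ) / ((t + 2 + (3 + q)).factorial : ℚ)) := by
  have h0 : nodeSeq t (3 + q) = t + 2 + (3 + q) := by
    rw [nodeSeq, if_neg (by omega), if_pos (by omega)]
  have h1 : ∏ i ∈ range q, (((t + 2 + (3 + q) : ℕ) : ℚ) - nodeSeq t (3 + i)) =
      (q.factorial : ℚ) := by
    rw [← prod_range_sub]
    refine prod_congr rfl fun i hi => ?_
    have hi := mem_range.mp hi
    rw [nodeSeq, if_neg (by omega), if_pos (by omega)]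
    push_cast
    ring
  rw [h0, prod_range_add, h1]
  have h2 : ((3 + q).factorial : ℚ) = (q + 3) * (q + 2) * (q + 1) * q.factorial := by
    rw [add_comm 3 q]
    simp only [Nat.factorial_succ]
    push_cast
    ring
  have h3 : ((t + 2 + (3 + q)).factorial : ℚ) ≠ 0 := by positivity
  have h4 : (q : ℚ) + 1 ≠ 0 := by positivity
  rw [h2]
  simp only [prod_range_succ, prod_range_zero, nodeSeq]
  simp only [show (0 : ℕ) < 3 by norm_num, show (1 : ℕ) < 3 by norm_num,
    show (2 : ℕ) < 3 by norm_num, if_true]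
  generalize ((t + 2 + (3 + q)).factorial : ℚ) = F at *
  push_cast
  field_simp
  ring

lemma factor_last (t : ℕ) :
    (∏ i ∈ range (3 + (2 * t + 1)), ((nodeSeq t (3 + (2 * t + 1)) : ℚ) - nodeSeq t i)) /
        ((nodeSeq t (3 + (2 * t + 1))).factorial : ℚ) =
      (2 * (t : ℚ) + 7) * (2 * t + 6) * (2 * t + 5) /
          (4 * (t + 2) * (3 * t + 7) * (3 * t + 8)) *
        (((3 + (2 * t + 1)).factorial : ℚ) / ((t + 2 + (3 + (2 * t + 1))).factorial : ℚ)) := by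
  have h0 : nodeSeq t (3 + (2 * t + 1)) = 3 * t + 8 := by
    rw [nodeSeq, if_neg (by omega), if_neg (by omega)]
    omega
  have h1 : 2 * ∏ i ∈ range (2 * t + 1), (((3 * t + 8 : ℕ) : ℚ) - nodeSeq t (3 + i)) =
      ((2 * t + 3).factorial : ℚ) := by
    rw [← prod_range_sub, prod_range_succ _ (2 * t + 2), prod_range_succ _ (2 * t + 1),
      mul_assoc, mul_comm]
    congr 1
    · refine prod_congr rfl fun i hi => ?_
      have hi := mem_range.mp hi
      rw [nodeSeq, if_neg (by omega), if_pos (by omega)]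
      push_cast
      ring
    · push_cast
      ring
  have h1' : ∏ i ∈ range (2 * t + 1), (((3 * t + 8 : ℕ) : ℚ) - nodeSeq t (3 + i)) =
      ((2 * t + 3).factorial : ℚ) / 2 := by
    rw [← h1]
    ring
  rw [h0, prod_range_add, h1']
  have h2 : ((3 + (2 * t + 1)).factorial : ℚ) = (2 * t + 4) * (2 * t + 3).factorial := by
    rw [show 3 + (2 * t + 1) = (2 * t + 3) + 1 by ring, Nat.factorial_succ]
    push_cast
    ring
  have h3 : ((3 * t + 8).factorial : ℚ) =
      (3 * t + 8) * (3 * t + 7) * (t + 2 + (3 + (2 * t + 1))).factorial := by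
    rw [show t + 2 + (3 + (2 * t + 1)) = 3 * t + 6 by ring, Nat.factorial_succ,
      Nat.factorial_succ]
    push_cast
    ring
  have h4 : ((t + 2 + (3 + (2 * t + 1))).factorial : ℚ) ≠ 0 := by positivity
  rw [h2, h3]
  simp only [prod_range_succ, prod_range_zero, nodeSeq]
  simp only [show (0 : ℕ) < 3 by norm_num, show (1 : ℕ) < 3 by norm_num,
    show (2 : ℕ) < 3 by norm_num, if_true]
  generalize ((t + 2 + (3 + (2 * t + 1))).factorial : ℚ) = F at *
  generalize ((2 * t + 3).factorial : ℚ) = G at *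
  push_cast
  have h5 : (t : ℚ) + 2 ≠ 0 := by positivity
  have h6 : 3 * (t : ℚ) + 7 ≠ 0 := by positivity
  have h7 : 3 * (t : ℚ) + 8 ≠ 0 := by positivity
  field_simp
  ring

lemma factor_first (t : ℕ) :
    ∏ k ∈ range 3, (∏ i ∈ range k, ((nodeSeq t k : ℚ) - nodeSeq t i)) /
        ((nodeSeq t k).factorial : ℚ) =
      ((t : ℚ) + 2) * (t + 3) * (t + 4) *
        ∏ k ∈ range 3, (k.factorial : ℚ) / ((t + 2 + k).factorial : ℚ) := by
  have e1 : (t + 1 + 1).factorial = (t + 2) * (t + 1).factorial := by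
    rw [Nat.factorial_succ]
  have e2 : (t + 1 + 2).factorial = (t + 3) * ((t + 2) * (t + 1).factorial) := by
    rw [Nat.factorial_succ, e1]
  have e3 : (t + 1 + 3).factorial = (t + 4) * ((t + 3) * ((t + 2) * (t + 1).factorial)) := by
    rw [Nat.factorial_succ, e2]
  simp only [prod_range_succ, prod_range_zero, nodeSeq]
  simp only [show (0 : ℕ) < 3 by norm_num, show (1 : ℕ) < 3 by norm_num,
    show (2 : ℕ) < 3 by norm_num, if_true]
  rw [show t + 2 + 0 = t + 1 + 1 by ring, show t + 2 + 1 = t + 1 + 2 by ring,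
    show t + 2 + 2 = t + 1 + 3 by ring, add_zero, e1, e2, e3]
  have h : ((t + 1).factorial : ℚ) ≠ 0 := by positivity
  simp only [Nat.factorial]
  push_cast
  field_simp
  ring

lemma prod_telescope (n : ℕ) :
    ∏ q ∈ range n, ((q : ℚ) + 4) / (q + 1) = ((n : ℚ) + 1) * (n + 2) * (n + 3) / 6 := by
  induction n with
  | zero => norm_num
  | succ n ih =>
    rw [prod_range_succ, ih]
    have : (n : ℚ) + 1 ≠ 0 := by positivity
    push_cast
    field_simp
    ring

/-- For `i₁ = 3`, `i_j = 1` for `2 ≤ j ≤ 2s−2` and `i_{2s−1} = i_{2s} = i_{2s+1} = 0`, the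
determinant of the `(2s+1)×(2s+1)` matrix with `(j,ℓ)`-entry `r(s − 1 + i_j − j + ℓ)`
equals `(s(2s+1)(s−1)(s+1)²(s+2)(2s−1)(2s+3)/(3(3s+1)(3s+2)))·∏_{k=0}^{2s} k!/(s+k)!`. -/
theorem harris_tu_determinant_cube_theta (s : ℕ) (hs : 2 ≤ s) :
    Matrix.det (Matrix.of fun j ℓ : Fin (2*s + 1) =>
        rfact ((s : ℤ) - 1 +
          (if (j : ℕ) = 0 then 3 else if (j : ℕ) < 2*s - 2 then 1 else 0) +
          (ℓ : ℕ) - (j : ℕ))) =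
      (s : ℚ) * (2*(s : ℚ) + 1) * ((s : ℚ) - 1) * ((s : ℚ) + 1)^2 * ((s : ℚ) + 2) *
          (2*(s : ℚ) - 1) * (2*(s : ℚ) + 3) / (3 * (3*(s : ℚ) + 1) * (3*(s : ℚ) + 2)) *
        ∏ k ∈ Finset.range (2*s + 1),
          (Nat.factorial k : ℚ) / (Nat.factorial (s + k) : ℚ) := by
  obtain ⟨t, rfl⟩ : ∃ t, s = t + 2 := ⟨s - 2, by omega⟩
  rw [← Matrix.det_submatrix_equiv_self Fin.revPerm]
  have hM : (Matrix.of fun j ℓ : Fin (2*(t + 2) + 1) =>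
        rfact (((t + 2 : ℕ) : ℤ) - 1 +
          (if (j : ℕ) = 0 then 3 else if (j : ℕ) < 2*(t + 2) - 2 then 1 else 0) +
          (ℓ : ℕ) - (j : ℕ))).submatrix Fin.revPerm Fin.revPerm =
      Matrix.of fun k m : Fin (2*(t + 2) + 1) => rfact ((nodeSeq t k : ℤ) - (m : ℕ)) := by
    ext k m
    simp only [Matrix.submatrix_apply, Matrix.of_apply, Fin.revPerm_apply, Fin.val_rev, nodeSeq]
    congr 1
    have := k.isLt
    have := m.isLt
    split_ifs <;> omega
  rw [hM, det_rfact, show 2 * (t + 2) + 1 = 3 + (2 * t + 1) + 1 by ring, prod_range_succ,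
    prod_range_succ (fun k => (Nat.factorial k : ℚ) / (Nat.factorial (t + 2 + k) : ℚ)),
    factor_last, prod_range_add, factor_first,
    prod_range_add (fun k => (Nat.factorial k : ℚ) / (Nat.factorial (t + 2 + k) : ℚ)),
    prod_congr rfl (fun q hq => factor_middle t q (mem_range.mp hq)), prod_mul_distrib,
    prod_telescope]
  generalize ∏ k ∈ range 3, (Nat.factorial k : ℚ) / (Nat.factorial (t + 2 + k) : ℚ) = A
  generalize ∏ q ∈ range (2 * t + 1),
    (Nat.factorial (3 + q) : ℚ) / (Nat.factorial (t + 2 + (3 + q)) : ℚ) = B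
  generalize ((3 + (2 * t + 1)).factorial : ℚ) /
    ((t + 2 + (3 + (2 * t + 1))).factorial : ℚ) = D
  push_cast
  have h5 : (t : ℚ) + 2 ≠ 0 := by positivity
  have h6 : 3 * (t : ℚ) + 7 ≠ 0 := by positivity
  have h7 : 3 * (t : ℚ) + 8 ≠ 0 := by positivity
  rw [show 3 * ((t : ℚ) + 2) + 1 = 3 * t + 7 by ring,
    show 3 * ((t : ℚ) + 2) + 2 = 3 * t + 8 by ring]
  field_simp
  ring
end
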